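/- (Theorem 1.2, colored version) Let G be a finite connected simple graph with vertex colors D and token colors f, and assume that at least one bijection μ of V with f(v) = D(μ(v)) for all v exists. Then the colored instance can be solved by at most 2·L* swaps along edges of G; if moreover G is a tree, it can be solved by at most L* swaps. -/

import Mathlib

/-- `ρ` is a product of at most `n` swaps along edges of `G`. -/
def TSReach {V : Type*} [DecidableEq V] (G : SimpleGraph V) (ρ : Equiv.Perm V) (n : ℕ) : Prop :=
  ∃ l : List (V × V), l.length ≤ n ∧ (∀ p ∈ l, G.Adj p.1 p.2) ∧
    ρ = (l.map fun p => Equiv.swap p.1 p.2).prod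

section TS

variable {V : Type*} [DecidableEq V] {G : SimpleGraph V}

theorem TSReach.one (n : ℕ) : TSReach G 1 n := ⟨[], by simp⟩

theorem TSReach.edge {u v : V} (h : G.Adj u v) : TSReach G (Equiv.swap u v) 1 :=
  ⟨[(u, v)], by simp [h]⟩

theorem TSReach.mono {ρ : Equiv.Perm V} {m n : ℕ} (h : TSReach G ρ m) (hmn : m ≤ n) :
    TSReach G ρ n := by
  obtain ⟨l, h1, h2⟩ := h
  exact ⟨l, h1.trans hmn, h2⟩

theorem TSReach.mul {ρ σ : Equiv.Perm V} {m n : ℕ} (h : TSReach G ρ m) (h' : TSReach G σ n) :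
    TSReach G (ρ * σ) (m + n) := by
  obtain ⟨l, h1, h2, h3⟩ := h
  obtain ⟨l', h1', h2', h3'⟩ := h'
  refine ⟨l ++ l', by simp; omega, ?_, by simp [h3, h3']⟩
  intro p hp
  rcases List.mem_append.1 hp with hp | hp
  · exact h2 p hp
  · exact h2' p hp

theorem TSReach.of_walk {u v : V} (p : G.Walk u v) :
    TSReach G (Equiv.swap u v) (2 * p.length) := by
  induction p with
  | nil => rw [Equiv.swap_self]; exact TSReach.one _
  | @cons u w v h p ih =>
    by_cases huv : u = v
    · subst huv; rw [Equiv.swap_self]; exact TSReach.one _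
    by_cases hwv : w = v
    · subst hwv; exact (TSReach.edge h).mono (by simp; omega)
    have key : Equiv.swap u v = Equiv.swap u w * Equiv.swap w v * Equiv.swap u w := by
      have := Equiv.swap_mul_swap_mul_swap (x := v) (y := w) (z := u) (Ne.symm hwv) (Ne.symm huv)
      rw [← this, Equiv.swap_comm w u, Equiv.swap_comm v w]
    rw [key]
    exact (((TSReach.edge h).mul ih).mul (TSReach.edge h)).mono (by simp; omega)

theorem TSReach.swap (hG : G.Connected) (u v : V) :
    TSReach G (Equiv.swap u v) (2 * G.dist u v) := by
  obtain ⟨p, hp⟩ := hG.exists_walk_length_eq_dist u v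
  rw [← hp]
  exact TSReach.of_walk p

theorem TSReach.iterate (hG : G.Connected) (σ : Equiv.Perm V) (n : ℕ) (a : V) :
    TSReach G (List.iterate σ a n).formPerm
      (2 * ((List.iterate σ a n).map fun v => G.dist v (σ v)).sum) := by
  induction n generalizing a with
  | zero => simpa using TSReach.one _
  | succ n ih =>
    cases n with
    | zero => simpa using TSReach.one _
    | succ n =>
      have h := (TSReach.swap hG a (σ a)).mul (ih (σ a))
      have e : (List.iterate σ a (n + 1 + 1)).formPerm =
          Equiv.swap a (σ a) * (List.iterate σ (σ a) (n + 1)).formPerm := by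
        simp [List.iterate, List.formPerm_cons_cons]
      rw [e]
      refine h.mono (le_of_eq ?_)
      simp [List.iterate]; ring

theorem TSReach.general [Fintype V] (hG : G.Connected) (μ : Equiv.Perm V) :
    TSReach G μ (2 * ∑ v, G.dist v (μ v)) := by
  induction μ using Equiv.Perm.cycle_induction_on with
  | base_one => exact TSReach.one _
  | base_cycles σ hσ =>
    obtain ⟨x, hx, -⟩ := id hσ
    have h := TSReach.iterate hG σ (σ.cycleOf x).support.card x
    change TSReach G (σ.toList x).formPerm
      (2 * ((σ.toList x).map fun v => G.dist v (σ v)).sum) at h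
    rw [Equiv.Perm.formPerm_toList, hσ.cycleOf_eq hx] at h
    refine h.mono (Nat.mul_le_mul_left 2 ?_)
    rw [← List.sum_toFinset _ (Equiv.Perm.nodup_toList σ x)]
    exact Finset.sum_le_sum_of_subset (Finset.subset_univ _)
  | induction_disjoint σ τ hd hσ h1 h2 =>
    refine (h1.mul h2).mono (le_of_eq ?_)
    rw [← mul_add, ← Finset.sum_add_distrib]
    congr 1
    refine Finset.sum_congr rfl fun v _ => ?_
    rcases hd v with h | h
    · rw [hd.commute.eq]; simp [h]
    · simp [h]

/-- The space of functions that are invariant under `μ`. Its dimension is the number of cycles. -/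
def tsFix (μ : Equiv.Perm V) : Submodule ℚ (V → ℚ) where
  carrier := {g | ∀ v, g (μ v) = g v}
  add_mem' := by intro a b ha hb v; simp [ha v, hb v]
  zero_mem' := by intro v; simp
  smul_mem' := by intro c a ha v; simp [ha v]

theorem mem_tsFix {μ : Equiv.Perm V} {g : V → ℚ} : g ∈ tsFix μ ↔ ∀ v, g (μ v) = g v := Iff.rfl

theorem tsFix_happy [Fintype V] (μ : Equiv.Perm V) (x y : V) :
    Module.finrank ℚ (tsFix (μ * Equiv.swap x y)) ≤ Module.finrank ℚ (tsFix μ) + 1 := by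
  set ν := μ * Equiv.swap x y with hν
  let φ : tsFix ν →ₗ[ℚ] ℚ :=
    ((LinearMap.proj x : (V → ℚ) →ₗ[ℚ] ℚ) - LinearMap.proj y).comp (tsFix ν).subtype
  have h1 := LinearMap.finrank_range_add_finrank_ker φ
  have h2 : Module.finrank ℚ (LinearMap.range φ) ≤ 1 := by
    simpa using Submodule.finrank_le (LinearMap.range φ)
  have h3 : (LinearMap.ker φ).map (tsFix ν).subtype ≤ tsFix μ := by
    rintro g ⟨⟨g', hg'⟩, hk, rfl⟩
    have hxy : g' x = g' y := by
      have : g' x - g' y = 0 := hk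
      linarith
    intro v
    change g' (μ v) = g' v
    have := hg' (Equiv.swap x y v)
    simp only [hν, Equiv.Perm.mul_apply, Equiv.swap_apply_self] at this
    rw [this]
    by_cases hx : v = x
    · subst hx; simp [hxy]
    by_cases hy : v = y
    · subst hy; simp [hxy]
    rw [Equiv.swap_apply_of_ne_of_ne hx hy]
  have h4 := Submodule.finrank_mono h3
  rw [Submodule.finrank_map_subtype_eq] at h4
  omega

theorem tsFix_unhappy [Fintype V] (μ : Equiv.Perm V) (x y : V) (hxy : x ≠ y) (hy : μ y = y) :
    Module.finrank ℚ (tsFix (μ * Equiv.swap x y)) + 1 ≤ Module.finrank ℚ (tsFix μ) := by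
  refine Nat.succ_le_of_lt (Submodule.finrank_lt_finrank_of_lt (lt_of_le_of_ne ?_ ?_))
  · intro g hg v
    have hx' : g y = g x := by simpa [hy] using hg x
    have hy' : g (μ x) = g y := by simpa using hg y
    by_cases hvx : v = x
    · subst hvx; rw [hy', hx']
    by_cases hvy : v = y
    · subst hvy; rw [hy]
    simpa [Equiv.swap_apply_of_ne_of_ne hvx hvy] using hg v
  · intro he
    have hmem : (Pi.single y 1 : V → ℚ) ∈ tsFix μ := by
      intro v
      by_cases hvy : v = y
      · subst hvy; rw [hy]
      · have : μ v ≠ y := fun h => hvy (μ.injective (h.trans hy.symm))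
        simp [hvy, this]
    rw [← he] at hmem
    have := hmem x
    simp [hy, hxy] at this

theorem ts_tree_unique (hT : G.IsTree) {r y a b : V} (ha : G.Adj y a) (hb : G.Adj y b)
    (hra : G.dist r a ≤ G.dist r y) (hrb : G.dist r b ≤ G.dist r y) : a = b := by
  have key : ∀ c, G.Adj y c → G.dist r c ≤ G.dist r y →
      ∃ p : G.Walk y r, p.IsPath ∧ p.snd = c := by
    intro c hc hrc
    obtain ⟨p, hp, hl⟩ := hT.connected.exists_path_of_dist c r
    refine ⟨SimpleGraph.Walk.cons hc p, ?_, by simp⟩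
    rw [SimpleGraph.Walk.cons_isPath_iff]
    refine ⟨hp, fun hmem => ?_⟩
    have e := congrArg SimpleGraph.Walk.length (p.take_spec hmem)
    rw [SimpleGraph.Walk.length_append] at e
    have h1 := SimpleGraph.dist_le (p.dropUntil y hmem)
    have h2 := SimpleGraph.dist_le (p.takeUntil y hmem)
    rw [SimpleGraph.dist_eq_one_iff_adj.2 hc.symm] at h2
    rw [SimpleGraph.dist_comm (u := r), SimpleGraph.dist_comm (u := r)] at hrc
    omega
  obtain ⟨p, hp, rfl⟩ := key a ha hra
  obtain ⟨q, hq, rfl⟩ := key b hb hrb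
  have := hT.isAcyclic.path_unique ⟨p, hp⟩ ⟨q, hq⟩
  rw [Subtype.mk.injEq] at this
  rw [this]

theorem ts_next (hG : G.Connected) {x t : V} (h : t ≠ x) :
    ∃ y, G.Adj x y ∧ G.dist y t + 1 = G.dist x t := by
  obtain ⟨p, hp⟩ := hG.exists_walk_length_eq_dist x t
  cases p with
  | nil => exact absurd rfl h
  | @cons _ y _ hxy p =>
    refine ⟨y, hxy, ?_⟩
    have h1 := SimpleGraph.dist_le p
    have h2 := hG.dist_triangle (u := x) (v := y) (w := t)
    rw [SimpleGraph.dist_eq_one_iff_adj.2 hxy] at h2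
    simp at hp
    omega

theorem ts_sum [Fintype V] (μ : Equiv.Perm V) {x y : V} (hxy : x ≠ y) :
    (∑ v, G.dist v ((μ * Equiv.swap x y) v)) + (G.dist x (μ x) + G.dist y (μ y)) =
      (∑ v, G.dist v (μ v)) + (G.dist x (μ y) + G.dist y (μ x)) := by
  have split : ∀ F : V → ℕ, ∑ v, F v = (F x + F y) + ∑ v ∈ {x, y}ᶜ, F v := by
    intro F
    rw [← Finset.sum_pair hxy, Finset.sum_add_sum_compl]
  rw [split, split (fun v => G.dist v (μ v))]
  have : ∑ v ∈ ({x, y} : Finset V)ᶜ, G.dist v ((μ * Equiv.swap x y) v) =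
      ∑ v ∈ ({x, y} : Finset V)ᶜ, G.dist v (μ v) := by
    refine Finset.sum_congr rfl fun v hv => ?_
    simp only [Finset.mem_compl, Finset.mem_insert, Finset.mem_singleton, not_or] at hv
    rw [Equiv.Perm.mul_apply, Equiv.swap_apply_of_ne_of_ne hv.1 hv.2]
  rw [this]
  simp
  ring

theorem ts_step [Fintype V] (hT : G.IsTree) (μ : Equiv.Perm V) (hμ : μ ≠ 1) :
    ∃ x y, G.Adj x y ∧ G.dist y (μ x) + 1 = G.dist x (μ x) ∧
      (μ y = y ∨ G.dist x (μ y) + 1 = G.dist y (μ y)) := by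
  by_contra! hcon
  have hn : ∀ x, ∃ y, μ x ≠ x → G.Adj x y ∧ G.dist y (μ x) + 1 = G.dist x (μ x) := by
    intro x
    by_cases h : μ x = x
    · exact ⟨x, fun h' => absurd h h'⟩
    · obtain ⟨y, hy⟩ := ts_next hT.connected h
      exact ⟨y, fun _ => hy⟩
  choose nx hnx using hn
  obtain ⟨r, hr⟩ : ∃ r, μ r ≠ r := by
    by_contra! h
    exact hμ (Equiv.ext h)
  let S : Finset V := {x | μ x ≠ x ∧ G.dist r x < G.dist r (nx x)}
  have hS : S.Nonempty := ⟨r, by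
    simp [S, hr, SimpleGraph.dist_eq_one_iff_adj.2 (hnx r hr).1]⟩
  obtain ⟨x, hxS, hmax⟩ := S.exists_max_image (fun x => G.dist r x) hS
  simp only [S, Finset.mem_filter, Finset.mem_univ, true_and] at hxS hmax
  obtain ⟨hx, hlt⟩ := hxS
  obtain ⟨hadj, hd⟩ := hnx x hx
  obtain ⟨hy, hne⟩ := hcon x (nx x) hadj hd
  obtain ⟨hadj', hd'⟩ := hnx (nx x) hy
  have hle : G.dist r (nx (nx x)) ≤ G.dist r (nx x) := by
    by_contra! h
    have := hmax _ ⟨hy, h⟩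
    omega
  have := ts_tree_unique hT hadj' hadj.symm hle hlt.le
  rw [this] at hd'
  exact hne hd'

theorem TSReach.tree_aux [Fintype V] (hT : G.IsTree) (k : ℕ) : ∀ μ : Equiv.Perm V,
    (∑ v, G.dist v (μ v)) + Module.finrank ℚ (tsFix μ) = k →
    ∃ m, TSReach G μ m ∧ m + Fintype.card V ≤ k := by
  induction k using Nat.strong_induction_on with
  | _ k ih =>
    intro μ hk
    by_cases hμ : μ = 1
    · subst hμ
      refine ⟨0, TSReach.one _, ?_⟩
      have : tsFix (1 : Equiv.Perm V) = ⊤ := by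
        ext g; simp [mem_tsFix]
      rw [this] at hk
      simp at hk
      omega
    obtain ⟨x, y, hxy, hd, hor⟩ := ts_step hT μ hμ
    have hs := ts_sum (G := G) μ hxy.ne
    have hlt : (∑ v, G.dist v ((μ * Equiv.swap x y) v)) +
        Module.finrank ℚ (tsFix (μ * Equiv.swap x y)) + 1 ≤ k := by
      rcases hor with h | h
      · have := tsFix_unhappy μ x y hxy.ne h
        rw [h, SimpleGraph.dist_self, SimpleGraph.dist_eq_one_iff_adj.2 hxy] at hs
        omega
      · have := tsFix_happy μ x y
        omega
    obtain ⟨m, hm, hmc⟩ := ih _ (by omega) (μ * Equiv.swap x y) rfl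
    refine ⟨m + 1, ?_, by omega⟩
    have := hm.mul (TSReach.edge hxy)
    rwa [mul_assoc, Equiv.swap_mul_self, mul_one] at this

theorem TSReach.tree [Fintype V] (hT : G.IsTree) (μ : Equiv.Perm V) :
    TSReach G μ (∑ v, G.dist v (μ v)) := by
  obtain ⟨m, hm, hc⟩ := TSReach.tree_aux hT _ μ rfl
  refine hm.mono ?_
  have := Submodule.finrank_le (tsFix μ)
  simp at this
  omega

end TS


/-- **Theorem 1.2, colored version.** Let `G` be a finite connected simple
graph with vertex colors `D` and token colors `f` (the token initially on `v` has color
`f v`), and assume that at least one bijection `μ` of `V` with `f v = D (μ v)` for all `v`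
exists.  Then the colored instance can be solved by at most `2·L*` swaps along edges of
`G`: there is a permutation `ρ` of `V` that is a product of at most `2·L*` transpositions
along edges of `G` with `f v = D (ρ v)` for every `v` (the token starting on `v` ends on
vertex `ρ v`, so every vertex holds a token of its own color).  If moreover `G` is a tree,
it can be solved by at most `L*` swaps.  Here `L*` is the minimum of
`Σ_{v ∈ V} dist_G(v, μ v)` over all bijections `μ` of `V` satisfying `f v = D (μ v)` for
all `v`. -/
theorem colored_token_swapping_solvable_within_twice_Lstar
    {V : Type*} {C : Type*} [Fintype V] [DecidableEq V]
    (G : SimpleGraph V) (hG : G.Connected)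
    (D f : V → C)
    (hex : ∃ μ : Equiv.Perm V, ∀ v, f v = D (μ v)) :
    (∃ (ρ : Equiv.Perm V) (l : List (V × V)),
      l.length ≤ 2 * sInf {n : ℕ | ∃ μ : Equiv.Perm V, (∀ v, f v = D (μ v)) ∧
        n = ∑ v, G.dist v (μ v)} ∧
      (∀ p ∈ l, G.Adj p.1 p.2) ∧
      ρ = (l.map fun p => Equiv.swap p.1 p.2).prod ∧
      ∀ v, f v = D (ρ v)) ∧
    (G.IsTree →
      ∃ (ρ : Equiv.Perm V) (l : List (V × V)),
        l.length ≤ sInf {n : ℕ | ∃ μ : Equiv.Perm V, (∀ v, f v = D (μ v)) ∧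
          n = ∑ v, G.dist v (μ v)} ∧
        (∀ p ∈ l, G.Adj p.1 p.2) ∧
        ρ = (l.map fun p => Equiv.swap p.1 p.2).prod ∧
        ∀ v, f v = D (ρ v)) := by

  obtain ⟨μ₀, hμ₀⟩ := hex
  obtain ⟨μ, hμ, hn⟩ := Nat.sInf_mem (s := {n : ℕ | ∃ μ : Equiv.Perm V,
    (∀ v, f v = D (μ v)) ∧ n = ∑ v, G.dist v (μ v)}) ⟨_, μ₀, hμ₀, rfl⟩
  rw [hn]
  refine ⟨?_, fun hT => ?_⟩
  · obtain ⟨l, h1, h2, h3⟩ := TSReach.general hG μ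
    exact ⟨μ, l, h1, h2, h3, hμ⟩
  · obtain ⟨l, h1, h2, h3⟩ := TSReach.tree hT μ
    exact ⟨μ, l, h1, h2, h3, hμ⟩
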